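/- Let V and W be real inner product spaces, G : V →ₗ[ℝ] W a linear map, ρ > 0, k > 0, Δt > 0 real constants and c = k⁻¹. Let v : ℕ → V and σ : ℕ → W satisfy the implicit midpoint mixed scheme: for all n ∈ ℕ and all ψ ∈ V, ρ⟪ψ, v(n+1) − v(n)⟫ = −Δt⟪G ψ, (1/2) • (σ(n) + σ(n+1))⟫, and for all n ∈ ℕ and all ξ ∈ W, c⟪ξ, σ(n+1) − σ(n)⟫ = Δt⟪ξ, G((1/2) • (v(n) + v(n+1)))⟫. Then for all n ≥ 1 and all ψ ∈ V, ρ⟪ψ, v(n+1) − 2•v(n) + v(n−1)⟫ = −Δt²·k⟪G ψ, G((1/4) • (v(n+1) + 2•v(n) + v(n−1)))⟫. -/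

import Mathlib

open scoped RealInnerProductSpace

/-!
Averaging consecutive terms of a sequence commutes with differencing and with linear maps.
Hence the difference of two consecutive momentum equations contains the average of two consecutive
stress increments. The stress equation expresses each of these through an average of velocities, so
the stress drops out and the velocity is averaged twice; for the midpoint rule the weights
`(1/2, 1/2)` convolve to `(1/4, 1/2, 1/4)`.
-/

section ThetaAvg

variable {R E F : Type*} [CommRing R] [AddCommGroup E] [Module R E] [AddCommGroup F] [Module R F]

/-- The `θ`-weighted average of consecutive terms of a sequence, at which a one-step `θ`-scheme
evaluates its right-hand side: `θ = 1/2` is the implicit midpoint rule, `θ = 0` and `θ = 1` are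
explicit and implicit evaluation. -/
def thetaAvg (θ : R) (u : ℕ → E) (n : ℕ) : E :=
  (1 - θ) • u n + θ • u (n + 1)

theorem map_thetaAvg (L : E →ₗ[R] F) (θ : R) (u : ℕ → E) (n : ℕ) :
    L (thetaAvg θ u n) = thetaAvg θ (fun m ↦ L (u m)) n := by
  simp only [thetaAvg, map_add, map_smul]

theorem thetaAvg_succ_sub_thetaAvg (θ : R) (u : ℕ → E) (n : ℕ) :
    thetaAvg θ u (n + 1) - thetaAvg θ u n = thetaAvg θ (fun m ↦ u (m + 1) - u m) n := by
  simp only [thetaAvg]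
  module

end ThetaAvg

section Half

variable {K E : Type*} [Field K] [NeZero (2 : K)] [AddCommGroup E] [Module K E]

theorem thetaAvg_half (u : ℕ → E) (n : ℕ) :
    thetaAvg (1 / 2 : K) u n = (1 / 2 : K) • (u n + u (n + 1)) := by
  rw [thetaAvg, sub_half, smul_add]

theorem thetaAvg_half_thetaAvg_half (u : ℕ → E) (n : ℕ) :
    thetaAvg (1 / 2 : K) (thetaAvg (1 / 2 : K) u) n =
      (1 / 4 : K) • (u (n + 2) + (2 : K) • u (n + 1) + u n) := by
  have quarter : (1 / 4 : K) = 1 / 2 * (1 / 2) := by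
    rw [div_mul_div_comm, one_mul, two_mul, two_add_two_eq_four]
  simp only [thetaAvg_half, quarter]
  module

end Half

section Elimination

variable {R V W X Y : Type*} [CommRing R] [AddCommGroup V] [Module R V] [AddCommGroup W]
  [Module R W] [AddCommGroup X] [Module R X] [AddCommGroup Y] [Module R Y]
  {D : W →ₗ[R] X} {C : W →ₗ[R] Y} {G : V →ₗ[R] Y} {T : Y →ₗ[R] X}
  {Δt η : R} {v : ℕ → V} {σ : ℕ → W}

-- `T` plays the role of `D ∘ C⁻¹`; asking only for `T ∘ₗ C = D` covers the weak form, where the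
-- stress equation is tested against one fixed `ξ` and `C` is the functional `c⟪ξ, ·⟫`.
theorem map_thetaAvg_succ_sub_thetaAvg (hT : T ∘ₗ C = D)
    (hσ : ∀ n, C (σ (n + 1) - σ n) = Δt • G (thetaAvg η v n)) (θ : R) (n : ℕ) :
    D (thetaAvg θ σ (n + 1) - thetaAvg θ σ n) =
      Δt • T (G (thetaAvg θ (thetaAvg η v) n)) :=
  calc D (thetaAvg θ σ (n + 1) - thetaAvg θ σ n)
    _ = T (C (thetaAvg θ (fun m ↦ σ (m + 1) - σ m) n)) := by
      rw [thetaAvg_succ_sub_thetaAvg, ← hT, LinearMap.comp_apply]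
    _ = T (thetaAvg θ (fun m ↦ (Δt • G) (thetaAvg η v m)) n) := by
      simp only [map_thetaAvg C, hσ, LinearMap.smul_apply]
    _ = Δt • T (G (thetaAvg θ (thetaAvg η v) n)) := by
      rw [← map_thetaAvg, LinearMap.smul_apply, map_smul]

theorem map_secondDiff_of_thetaScheme (M : V →ₗ[R] X) (hT : T ∘ₗ C = D) {θ : R}
    (hv : ∀ n, M (v (n + 1) - v n) = -(Δt • D (thetaAvg θ σ n)))
    (hσ : ∀ n, C (σ (n + 1) - σ n) = Δt • G (thetaAvg η v n)) (n : ℕ) :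
    M (v (n + 2) - (2 : R) • v (n + 1) + v n) =
      -(Δt ^ 2 • T (G (thetaAvg θ (thetaAvg η v) n))) :=
  calc M (v (n + 2) - (2 : R) • v (n + 1) + v n)
    _ = M (v (n + 2) - v (n + 1)) - M (v (n + 1) - v n) := by
      rw [← map_sub]
      congr 1
      module
    _ = -(Δt • D (thetaAvg θ σ (n + 1) - thetaAvg θ σ n)) := by
      rw [hv, hv, map_sub]
      module
    _ = -(Δt ^ 2 • T (G (thetaAvg θ (thetaAvg η v) n))) := by
      rw [map_thetaAvg_succ_sub_thetaAvg hT hσ, smul_smul, ← sq]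

end Elimination

theorem stmt8_general {K V W X Y : Type*} [Field K] [NeZero (2 : K)] [AddCommGroup V] [Module K V]
    [AddCommGroup W] [Module K W] [AddCommGroup X] [Module K X] [AddCommGroup Y] [Module K Y]
    (M : V →ₗ[K] X) {D : W →ₗ[K] X} {C : W →ₗ[K] Y} {G : V →ₗ[K] Y} {T : Y →ₗ[K] X}
    (hT : T ∘ₗ C = D) {Δt : K} {v : ℕ → V} {σ : ℕ → W}
    (hv : ∀ n, M (v (n + 1) - v n) = -(Δt • D ((1 / 2 : K) • (σ n + σ (n + 1)))))
    (hσ : ∀ n, C (σ (n + 1) - σ n) = Δt • G ((1 / 2 : K) • (v n + v (n + 1))))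
    {n : ℕ} (hn : 1 ≤ n) :
    M (v (n + 1) - (2 : K) • v n + v (n - 1)) =
      -(Δt ^ 2 • T (G ((1 / 4 : K) • (v (n + 1) + (2 : K) • v n + v (n - 1))))) := by
  obtain ⟨n, rfl⟩ := Nat.exists_eq_add_of_le' hn
  simp only [← thetaAvg_half] at hv hσ
  rw [Nat.add_sub_cancel, ← thetaAvg_half_thetaAvg_half]
  exact map_secondDiff_of_thetaScheme M hT hv hσ n

theorem stmt8 {V W : Type*} [NormedAddCommGroup V] [InnerProductSpace ℝ V]
    [NormedAddCommGroup W] [InnerProductSpace ℝ W]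
    (G : V →ₗ[ℝ] W) (ρ k Δt c : ℝ) (hρ : 0 < ρ) (hk : 0 < k) (hΔt : 0 < Δt)
    (hc : c = k⁻¹)
    (v : ℕ → V) (σ : ℕ → W)
    (hdyn : ∀ n : ℕ, ∀ ψ : V, ρ * ⟪ψ, v (n + 1) - v n⟫ =
      -(Δt * ⟪G ψ, (1 / 2 : ℝ) • (σ n + σ (n + 1))⟫))
    (hσupd : ∀ n : ℕ, ∀ ξ : W,
      c * ⟪ξ, σ (n + 1) - σ n⟫ = Δt * ⟪ξ, G ((1 / 2 : ℝ) • (v n + v (n + 1)))⟫) :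
    ∀ n : ℕ, 1 ≤ n → ∀ ψ : V,
      ρ * ⟪ψ, v (n + 1) - (2 : ℝ) • v n + v (n - 1)⟫ =
        -(Δt ^ 2 * k *
          ⟪G ψ, G ((1 / 4 : ℝ) • (v (n + 1) + (2 : ℝ) • v n + v (n - 1)))⟫) := by
  intro n hn ψ
  rw [mul_assoc]
  exact stmt8_general (ρ • innerₛₗ ℝ ψ) (C := c • innerₛₗ ℝ (G ψ)) (G := innerₛₗ ℝ (G ψ) ∘ₗ G)
    (T := k • LinearMap.id) (hc ▸ smul_inv_smul₀ hk.ne' (innerₛₗ ℝ (G ψ)))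
    (hdyn · ψ) (hσupd · (G ψ)) hn
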